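/- Let (ϱ,ς) be a direction with ϱ > 0 and ϱ + ς < 0, and let R, G ∈ K[x,y] be (ϱ,ς)-homogeneous polynomials such that R is not a monomial and [G,R] = R^i for some integer i ≥ 1. Assume v_{ϱ,ς}(R) ≥ ϱ and, writing (α′,β′) := en_{ϱ,ς}(R), that α′ − 2β′ ≤ 0. Write (α,β) := st_{ϱ,ς}(R). If β < α and β ≤ (α − β − 1)², then β′ < α′ and β′ ≤ (α′ − β′ − 1)². -/

import Mathlib

open MvPolynomial

noncomputable section

variable {K : Type*} [Field K] [CharZero K]

/-- The support of `P` as a set of pairs `(i,j)` of exponents of `x^i y^j`. -/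
def Supp (P : MvPolynomial (Fin 2) K) : Set (ℕ × ℕ) :=
  {p | MvPolynomial.coeff (Finsupp.single 0 p.1 + Finsupp.single 1 p.2) P ≠ 0}

/-- The Jacobian bracket `[P,Q] = ∂ₓP ∂_yQ − ∂ₓQ ∂_yP`. -/
def Jb (P Q : MvPolynomial (Fin 2) K) : MvPolynomial (Fin 2) K :=
  pderiv 0 P * pderiv 1 Q - pderiv 0 Q * pderiv 1 P

/-- The `(ρ,σ)`-degree `v_{ρ,σ}(P)` (the maximum of `ρi+σj` on the support). -/
def wdeg (ρ σ : ℤ) (P : MvPolynomial (Fin 2) K) : ℤ :=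
  sSup {d : ℤ | ∃ p ∈ Supp P, d = ρ * (p.1 : ℤ) + σ * (p.2 : ℤ)}

/-- The support of the `(ρ,σ)`-leading form of `P`. -/
def LeadSupp (ρ σ : ℤ) (P : MvPolynomial (Fin 2) K) : Set (ℕ × ℕ) :=
  {p | p ∈ Supp P ∧ ρ * (p.1 : ℤ) + σ * (p.2 : ℤ) = wdeg ρ σ P}

/-- `P` is `(ρ,σ)`-homogeneous. -/
def IsHomog (ρ σ : ℤ) (P : MvPolynomial (Fin 2) K) : Prop :=
  ∀ p ∈ Supp P, ∀ q ∈ Supp P,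
    ρ * (p.1 : ℤ) + σ * (p.2 : ℤ) = ρ * (q.1 : ℤ) + σ * (q.2 : ℤ)

/-- `P` is a monomial: its support has at most one point. -/
def IsMonomial (P : MvPolynomial (Fin 2) K) : Prop := (Supp P).Subsingleton

/-- `e` is the point `en_{ρ,σ}(P)`: the point of the support of the leading form
with largest second coordinate. -/
def IsEn (ρ σ : ℤ) (P : MvPolynomial (Fin 2) K) (e : ℕ × ℕ) : Prop :=
  e ∈ LeadSupp ρ σ P ∧ ∀ q ∈ LeadSupp ρ σ P, q.2 ≤ e.2

/-- `e` is the point `st_{ρ,σ}(P)`: the point of the support of the leading form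
with smallest second coordinate. -/
def IsSt (ρ σ : ℤ) (P : MvPolynomial (Fin 2) K) (e : ℕ × ℕ) : Prop :=
  e ∈ LeadSupp ρ σ P ∧ ∀ q ∈ LeadSupp ρ σ P, e.2 ≤ q.2

/-!
Put `f = R(1, y)` and `g = G(1, y)`. By Euler's identity, `[G, R] = R ^ i` becomes the differential
equation `v f' g - w f g' = ρ f ^ i`, where `v` and `w` are the weights of `G` and `R`. At a point
`a` where `f` and `g` vanish to orders `m` and `n`, either `v m = w n` (a resonance) or
`m + n = i m + 1`; at infinity the same dichotomy bounds the degrees.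

Let `d = -(ρ + σ)`, so that `v + w + d = i w`, and let `β' - β = k ρ`. As `f` has at most `k + 1`
terms, its nonzero roots have multiplicity at most `k`; so if `w > d k`, none of them is resonant.
If `0` is not resonant either, then `f g` has at least `i β' + 2` roots, one extra for `0` and one
for a nonzero root of `f`, which contradicts the behaviour at infinity. So `0` is resonant, and
because `ρ` and `σ` are coprime this makes `w` divide `α - β`. Thus `w ≤ d k` or `w ≤ α - β`, and
with `ρ ≤ w` either one bounds `ρ` by `α' - β' - 1 = (α - β - 1) + k d`.
-/

section Univariate

open Polynomial

theorem rootMultiplicity_lt_card_support {A : Type*} [CommRing A] [IsDomain A] [CharZero A]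
    {f : A[X]} (hf : f ≠ 0) {a : A} (ha : a ≠ 0) :
    f.rootMultiplicity a < f.support.card := by
  induction hn : f.support.card using Nat.strong_induction_on generalizing f with
  | _ n ih =>
  subst hn
  have hmem := natDegree_mem_support_of_nonzero hf
  by_cases hroot : f.IsRoot a
  swap
  · rw [rootMultiplicity_eq_zero hroot]
    exact Finset.card_pos.2 ⟨_, hmem⟩
  set d := f.natDegree
  -- The operator `X · d/dX - d` kills the leading term of `f` and no other term.
  let g := Polynomial.X * derivative f - Polynomial.C (d : A) * f
  have hcoeff (j : ℕ) : g.coeff j = (j - d) * f.coeff j := by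
    cases j with
    | zero => simp [g]
    | succ j =>
      simp only [g, map_natCast, Polynomial.coeff_sub, Polynomial.coeff_X_mul, coeff_derivative,
        coeff_natCast_mul, Nat.cast_add, Nat.cast_one]
      ring
  have hsupp : g.support = f.support.erase d := by
    ext j
    simp [hcoeff, sub_eq_zero]
  have hg : g ≠ 0 := by
    intro hg
    have hle : f.support.card ≤ 1 := by
      rw [← Finset.card_erase_add_one hmem, ← hsupp, hg, Polynomial.support_zero, Finset.card_empty]
    obtain ⟨n, c, rfl⟩ := card_support_le_one_iff_monomial.1 hle
    simp_all [IsRoot]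
  have hdvd : (Polynomial.X - Polynomial.C a) ^ (f.rootMultiplicity a - 1) ∣ g :=
    dvd_sub ((pow_sub_one_dvd_derivative_of_pow_dvd (pow_rootMultiplicity_dvd f a)).mul_left _)
      (((pow_dvd_pow _ (Nat.sub_le _ 1)).trans (pow_rootMultiplicity_dvd f a)).mul_left _)
  have hcard : g.support.card + 1 = f.support.card := by
    rw [hsupp, Finset.card_erase_add_one hmem]
  have hmult := (le_rootMultiplicity_iff hg).2 hdvd
  have hlt := ih _ (by omega) hg rfl
  omega

theorem exists_mem_roots_ne {A : Type*} [CommRing A] [IsDomain A] {f : A[X]} (hf : f.Splits)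
    {a : A} (h : f.rootMultiplicity a < f.natDegree) : ∃ b ∈ f.roots, b ≠ a := by
  classical
  by_contra! hall
  rw [← count_roots, hf.natDegree_eq_card_roots,
    Multiset.count_eq_card.2 fun b hb => (hall b hb).symm] at h
  exact h.false

/-- The weighted Wronskian `v f' g - w f g'`, which is `f g` times the logarithmic derivative of
`f ^ v / g ^ w`. Up to a constant factor it is the bracket `[G, R]` of two weighted homogeneous
polynomials of weights `v` and `w`, read off on `g = G(1, y)` and `f = R(1, y)`. -/
def weightedWronskian {A : Type*} [CommRing A] (v w : A) (f g : A[X]) : A[X] :=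
  Polynomial.C v * derivative f * g - Polynomial.C w * f * derivative g

namespace weightedWronskian

theorem map {A B : Type*} [CommRing A] [CommRing B] (φ : A →+* B) (v w : A) (f g : A[X]) :
    (weightedWronskian v w f g).map φ = weightedWronskian (φ v) (φ w) (f.map φ) (g.map φ) := by
  simp [weightedWronskian, derivative_map]

theorem coeff_X_mul_natDegree_add_natDegree {A : Type*} [CommRing A] (v w : A) (f g : A[X]) :
    (Polynomial.X * weightedWronskian v w f g).coeff (f.natDegree + g.natDegree) =
      (v * f.natDegree - w * g.natDegree) * (f.leadingCoeff * g.leadingCoeff) := by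
  have hdegree (p : A[X]) : (Polynomial.X * derivative p).natDegree ≤ p.natDegree := by
    refine natDegree_le_iff_coeff_eq_zero.2 fun n hn => ?_
    obtain ⟨n, rfl⟩ := Nat.exists_eq_succ_of_ne_zero (Nat.ne_zero_of_lt hn)
    simp [Polynomial.coeff_X_mul, coeff_derivative, coeff_eq_zero_of_natDegree_lt hn]
  have hcoeff (p : A[X]) : (Polynomial.X * derivative p).coeff p.natDegree =
      p.natDegree * p.leadingCoeff := by
    rw [leadingCoeff]
    cases p.natDegree <;> simp [Polynomial.coeff_X_mul, coeff_derivative, mul_comm]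
  have hsplit : Polynomial.X * weightedWronskian v w f g =
      Polynomial.C v * (Polynomial.X * derivative f * g) -
        Polynomial.C w * (f * (Polynomial.X * derivative g)) := by
    rw [weightedWronskian]
    ring
  rw [hsplit, Polynomial.coeff_sub, Polynomial.coeff_C_mul, Polynomial.coeff_C_mul,
    coeff_mul_add_eq_of_natDegree_le (hdegree f) le_rfl,
    coeff_mul_add_eq_of_natDegree_le le_rfl (hdegree g), hcoeff, hcoeff]
  simp only [coeff_natDegree]
  ring

section Domain

variable {A : Type*} [CommRing A] [IsDomain A] {v w c : A} {f g : A[X]} {i : ℕ}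

theorem rootMultiplicity_X_sub_C_mul (hf : f ≠ 0) (hg : g ≠ 0) {a : A}
    (h : v * f.rootMultiplicity a ≠ w * g.rootMultiplicity a) :
    ((Polynomial.X - Polynomial.C a) * weightedWronskian v w f g).rootMultiplicity a =
      f.rootMultiplicity a + g.rootMultiplicity a := by
  obtain ⟨p, hfp, hp⟩ := exists_eq_pow_rootMultiplicity_mul_and_not_dvd f hf a
  obtain ⟨q, hgq, hq⟩ := exists_eq_pow_rootMultiplicity_mul_and_not_dvd g hg a
  set m := f.rootMultiplicity a
  set k := g.rootMultiplicity a
  let l := Polynomial.X - Polynomial.C a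
  have hl_mul_derivative (n : ℕ) (r : A[X]) :
      l * derivative (l ^ n * r) = l ^ n * (n * r + l * derivative r) := by
    cases n with
    | zero => simp
    | succ n =>
      rw [derivative_mul, derivative_X_sub_C_pow, Nat.add_sub_cancel, map_natCast]
      ring
  let u := Polynomial.C (v * m - w * k) * (p * q) + l * weightedWronskian v w p q
  have hu : l * weightedWronskian v w f g = u * l ^ (m + k) := by
    have hf' := hl_mul_derivative m p
    have hg' := hl_mul_derivative k q
    rw [← hfp] at hf'
    rw [← hgq] at hg'
    simp only [u, weightedWronskian, map_sub, map_mul, map_natCast]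
    linear_combination Polynomial.C v * g * hf' - Polynomial.C w * f * hg' +
      Polynomial.C v * l ^ m * (m * p + l * derivative p) * hgq -
      Polynomial.C w * l ^ k * (k * q + l * derivative q) * hfp
  have hroot : ¬ u.IsRoot a := by
    rw [dvd_iff_isRoot, IsRoot] at hp hq
    simp [u, l, hp, hq, sub_ne_zero.2 h]
  have hu0 : u ≠ 0 := by
    intro h0
    simp [h0] at hroot
  change (l * _).rootMultiplicity a = _
  rw [hu, rootMultiplicity_mul_X_sub_C_pow hu0, rootMultiplicity_eq_zero hroot, zero_add]

theorem rootMultiplicity_add_rootMultiplicity (hf : f ≠ 0) (hg : g ≠ 0) (hc : c ≠ 0)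
    (hE : weightedWronskian v w f g = Polynomial.C c * f ^ i) {a : A}
    (h : v * f.rootMultiplicity a ≠ w * g.rootMultiplicity a) :
    f.rootMultiplicity a + g.rootMultiplicity a = i * f.rootMultiplicity a + 1 := by
  classical
  have hfi : Polynomial.C c * f ^ i ≠ 0 :=
    mul_ne_zero (Polynomial.C_ne_zero.2 hc) (pow_ne_zero i hf)
  rw [← rootMultiplicity_X_sub_C_mul hf hg h, hE,
    rootMultiplicity_mul (mul_ne_zero (X_sub_C_ne_zero a) hfi), rootMultiplicity_mul hfi,
    rootMultiplicity_X_sub_C_self, rootMultiplicity_C,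
    ← count_roots (f ^ i), roots_pow, Multiset.count_nsmul, count_roots]
  ring

theorem natDegree_add_natDegree_le (hf : f ≠ 0) (hg : g ≠ 0)
    (hE : weightedWronskian v w f g = Polynomial.C c * f ^ i)
    (h : v * f.natDegree ≠ w * g.natDegree) :
    f.natDegree + g.natDegree ≤ i * f.natDegree + 1 := by
  have hne : (Polynomial.X * weightedWronskian v w f g).coeff (f.natDegree + g.natDegree) ≠ 0 := by
    rw [coeff_X_mul_natDegree_add_natDegree]
    exact mul_ne_zero (sub_ne_zero.2 h)
      (mul_ne_zero (leadingCoeff_ne_zero.2 hf) (leadingCoeff_ne_zero.2 hg))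
  calc f.natDegree + g.natDegree
      ≤ (Polynomial.X * weightedWronskian v w f g).natDegree := le_natDegree_of_ne_zero hne
    _ ≤ 1 + i * f.natDegree := by
      rw [hE]
      exact natDegree_mul_le_of_le natDegree_X_le
        ((natDegree_C_mul_le _ _).trans natDegree_pow_le)
    _ = i * f.natDegree + 1 := add_comm _ _

theorem mul_natDegree_add_two_le_of_splits [CharZero A] (hsplits : f.Splits) (hf : f ≠ 0)
    (hg : g ≠ 0) (hc : c ≠ 0)
    (hE : weightedWronskian v w f g = Polynomial.C c * f ^ i)
    (hvw : ∀ m n : ℕ, 0 < m → m < f.support.card → v * m ≠ w * n)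
    (hzero : f.rootMultiplicity 0 + g.rootMultiplicity 0 = i * f.rootMultiplicity 0 + 1)
    (hlt : f.rootMultiplicity 0 < f.natDegree) :
    i * f.natDegree + 2 ≤ f.natDegree + g.natDegree := by
  classical
  obtain ⟨b, hb, hb0⟩ := exists_mem_roots_ne hsplits hlt
  have hfg : f * g ≠ 0 := mul_ne_zero hf hg
  have hroots : i • f.roots + {0, b} ≤ (f * g).roots := by
    refine Multiset.le_iff_count.2 fun a => ?_
    simp only [Multiset.count_add, Multiset.count_nsmul, count_roots, rootMultiplicity_mul hfg,
      Multiset.insert_eq_cons, Multiset.count_cons, Multiset.count_singleton]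
    rcases eq_or_ne a 0 with rfl | ha
    · simp [hzero, hb0.symm]
    rcases (f.rootMultiplicity a).eq_zero_or_pos with hm | hm
    · have hab : a ≠ b := by
        rintro rfl
        exact hm.not_gt ((rootMultiplicity_pos hf).2 (isRoot_of_mem_roots hb))
      simp [hm, ha, hab]
    · rw [rootMultiplicity_add_rootMultiplicity hf hg hc hE
        (hvw _ _ hm (rootMultiplicity_lt_card_support hf ha)), if_neg ha]
      split_ifs <;> omega
  calc i * f.natDegree + 2 = (i • f.roots + {0, b}).card := by
        simp [hsplits.natDegree_eq_card_roots]
    _ ≤ (f * g).roots.card := Multiset.card_le_card hroots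
    _ ≤ (f * g).natDegree := card_roots' _
    _ = f.natDegree + g.natDegree := natDegree_mul hf hg

end Domain

section Field

variable {F : Type*} [Field F] [CharZero F] {f g : F[X]} {i : ℕ}

theorem mul_natDegree_add_two_le {v w c : F} (hf : f ≠ 0) (hg : g ≠ 0) (hc : c ≠ 0)
    (hE : weightedWronskian v w f g = Polynomial.C c * f ^ i)
    (hvw : ∀ m n : ℕ, 0 < m → m < f.support.card → v * m ≠ w * n)
    (hzero : f.rootMultiplicity 0 + g.rootMultiplicity 0 = i * f.rootMultiplicity 0 + 1)
    (hlt : f.rootMultiplicity 0 < f.natDegree) :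
    i * f.natDegree + 2 ≤ f.natDegree + g.natDegree := by
  let φ := algebraMap F (AlgebraicClosure F)
  have hφ : Function.Injective φ := φ.injective
  have hmult (p : F[X]) : (p.map φ).rootMultiplicity 0 = p.rootMultiplicity 0 := by
    rw [eq_rootMultiplicity_map hφ, map_zero]
  have hE' : weightedWronskian (φ v) (φ w) (f.map φ) (g.map φ) =
      Polynomial.C (φ c) * f.map φ ^ i := by
    rw [← weightedWronskian.map, hE, Polynomial.map_mul, Polynomial.map_C, Polynomial.map_pow]
  have hvw' (m n : ℕ) (hm : 0 < m) (hmlt : m < (f.map φ).support.card) : φ v * m ≠ φ w * n := by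
    rw [support_map_of_injective f hφ] at hmlt
    simpa only [map_mul, map_natCast] using hφ.ne (hvw m n hm hmlt)
  simpa only [natDegree_map] using
    mul_natDegree_add_two_le_of_splits (IsAlgClosed.splits _)
      ((Polynomial.map_ne_zero_iff hφ).2 hf) ((Polynomial.map_ne_zero_iff hφ).2 hg)
      ((map_ne_zero φ).2 hc) hE' hvw' (by simpa only [hmult] using hzero)
      (by simpa only [hmult, natDegree_map] using hlt)

theorem mul_rootMultiplicity_zero_eq_mul {v w d : ℤ} {c : F} (hf : f ≠ 0) (hg : g ≠ 0) (hc : c ≠ 0)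
    (hE : weightedWronskian (v : F) (w : F) f g = Polynomial.C c * f ^ i)
    (hvw : v + w + d = i * w) (hd : 0 < d) (hw : d * (f.support.card - 1) < w)
    (hlt : f.rootMultiplicity 0 < f.natDegree) :
    v * f.rootMultiplicity 0 = w * g.rootMultiplicity 0 := by
  have hcard : 0 < f.support.card := Finset.card_pos.2 (nonempty_support_iff.2 hf)
  have hw0 : 0 < w := by nlinarith
  have hdefect (m n : ℕ) (h : v * m = w * n) : w * (i * m - m - n) = d * m := by
    linear_combination h - m * hvw
  have hnonresonant (m n : ℕ) (hm : 0 < m) (hmlt : m < f.support.card) :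
      (v : F) * m ≠ w * n := by
    intro h
    have heq := hdefect m n (by exact_mod_cast h)
    have hpos : 0 < d * m := by positivity
    have hdm : d * m < w := by nlinarith
    exact hdm.not_ge (Int.le_of_dvd hpos ⟨_, heq.symm⟩)
  by_contra hzero
  have hdeg := mul_natDegree_add_two_le hf hg hc hE hnonresonant
    (rootMultiplicity_add_rootMultiplicity hf hg hc hE (by exact_mod_cast hzero)) hlt
  have hinfty : (v : F) * f.natDegree = w * g.natDegree := by
    by_contra h
    have := natDegree_add_natDegree_le hf hg hE h
    omega
  have heq := hdefect f.natDegree g.natDegree (by exact_mod_cast hinfty)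
  have hneg : (i * f.natDegree - f.natDegree - g.natDegree : ℤ) < 0 := by
    zify at hdeg
    linarith
  have hnonneg : 0 ≤ d * f.natDegree := by positivity
  exact ((mul_neg_of_pos_of_neg hw0 hneg).trans_le hnonneg).ne heq

end Field

end weightedWronskian

end Univariate

section Dehomogenization

/-- The specialization `P(1, y)`, which keeps the terms of a `(ρ, σ)`-homogeneous `P` apart as long
as `ρ ≠ 0`. -/
def dehomogenize {A : Type*} [CommRing A] : MvPolynomial (Fin 2) A →ₐ[A] Polynomial A :=
  aeval ![1, Polynomial.X]

variable {A : Type*} [CommRing A] {ρ σ v w : ℤ}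

theorem dehomogenize_X_zero : dehomogenize (X 0 : MvPolynomial (Fin 2) A) = 1 := by
  simp [dehomogenize]

theorem dehomogenize_X_one : dehomogenize (X 1 : MvPolynomial (Fin 2) A) = Polynomial.X := by
  simp [dehomogenize]

theorem derivative_dehomogenize (P : MvPolynomial (Fin 2) A) :
    Polynomial.derivative (dehomogenize P) = dehomogenize (pderiv 1 P) := by
  induction P using MvPolynomial.induction_on with
  | C a => simp [dehomogenize]
  | add p q hp hq => simp only [map_add, hp, hq]
  | mul_X p j hp =>
    simp only [map_mul, Polynomial.derivative_mul, hp, Derivation.leibniz, smul_eq_mul,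
      map_add, pderiv_X]
    fin_cases j <;> simp [dehomogenize_X_zero, dehomogenize_X_one, add_comm, mul_comm]

theorem sum_intCast_weight_mul_X_mul_pderiv {τ : Type*} [Fintype τ]
    {w : τ → ℤ} {n : ℤ} {P : MvPolynomial τ A} (hP : P.IsWeightedHomogeneous w n) :
    ∑ t, (w t : MvPolynomial τ A) * (X t * pderiv t P) = n * P := by
  have hmonomial (m : τ →₀ ℕ) (hm : m ∈ P.support) :
      ∑ t, (w t : MvPolynomial τ A) * (X t * pderiv t (monomial m (coeff m P))) =
        n * monomial m (coeff m P) := by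
    have hn : ∑ t, m t * w t = n := by
      simpa [Finsupp.weight_apply, Finsupp.sum_fintype] using hP (mem_support_iff.1 hm)
    rw [← hn, Int.cast_sum, Finset.sum_mul]
    refine Finset.sum_congr rfl fun t _ => ?_
    rw [X_mul_pderiv_monomial, nsmul_eq_mul]
    push_cast
    ring
  conv_lhs => rw [P.as_sum]
  conv_rhs => rw [P.as_sum]
  simp_rw [map_sum, Finset.mul_sum]
  rw [Finset.sum_comm]
  exact Finset.sum_congr rfl hmonomial

theorem coeff_dehomogenize (P : MvPolynomial (Fin 2) A) (j : ℕ) :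
    (dehomogenize P).coeff j = ∑ m ∈ P.support with m 1 = j, coeff m P := by
  rw [dehomogenize, aeval_def, eval₂_eq', Polynomial.finsetSum_coeff, Finset.sum_filter]
  refine Finset.sum_congr rfl fun m _ => ?_
  simp [Polynomial.coeff_X_pow, eq_comm]

theorem C_mul_dehomogenize_pderiv_zero {P : MvPolynomial (Fin 2) A}
    (hP : P.IsWeightedHomogeneous ![ρ, σ] v) :
    Polynomial.C (ρ : A) * dehomogenize (pderiv 0 P) =
      Polynomial.C (v : A) * dehomogenize P -
        Polynomial.C (σ : A) * Polynomial.X * Polynomial.derivative (dehomogenize P) := by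
  have hEuler := congrArg dehomogenize (sum_intCast_weight_mul_X_mul_pderiv hP)
  rw [derivative_dehomogenize]
  simp only [Fin.sum_univ_two, map_add, map_mul, map_intCast, Matrix.cons_val_zero,
    Matrix.cons_val_one, dehomogenize_X_zero, dehomogenize_X_one] at hEuler ⊢
  linear_combination hEuler

variable {F : Type*} [Field F] {G R : MvPolynomial (Fin 2) F}

theorem C_mul_dehomogenize_jb (hG : G.IsWeightedHomogeneous ![ρ, σ] v)
    (hR : R.IsWeightedHomogeneous ![ρ, σ] w) :
    Polynomial.C (ρ : F) * dehomogenize (Jb G R) =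
      weightedWronskian (v : F) (w : F) (dehomogenize R) (dehomogenize G) := by
  have hG' := C_mul_dehomogenize_pderiv_zero hG
  have hR' := C_mul_dehomogenize_pderiv_zero hR
  rw [Jb, map_sub, map_mul, map_mul, ← derivative_dehomogenize, ← derivative_dehomogenize,
    weightedWronskian]
  linear_combination Polynomial.derivative (dehomogenize R) * hG' -
    Polynomial.derivative (dehomogenize G) * hR'

theorem isWeightedHomogeneous_jb (hG : G.IsWeightedHomogeneous ![ρ, σ] v)
    (hR : R.IsWeightedHomogeneous ![ρ, σ] w) :
    (Jb G R).IsWeightedHomogeneous ![ρ, σ] (v + w - ρ - σ) := by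
  have hmul {P Q : MvPolynomial (Fin 2) F} {a b : ℤ} (hP : P.IsWeightedHomogeneous ![ρ, σ] a)
      (hQ : Q.IsWeightedHomogeneous ![ρ, σ] b) :
      (pderiv 0 P * pderiv 1 Q).IsWeightedHomogeneous ![ρ, σ] (a + b - ρ - σ) := by
    rw [show a + b - ρ - σ = (a - ρ) + (b - σ) by ring]
    exact (hP.pderiv (by simp)).mul (hQ.pderiv (by simp))
  exact (hmul hG hR).sub (by simpa only [add_comm] using hmul hR hG)

end Dehomogenization

section Homogeneous

variable {F : Type*} [Field F] {ρ σ : ℤ} {P : MvPolynomial (Fin 2) F} {p q : ℕ × ℕ}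

namespace IsHomog

theorem wdeg_eq (hP : IsHomog ρ σ P) (hp : p ∈ Supp P) : wdeg ρ σ P = ρ * p.1 + σ * p.2 := by
  have hset : {d : ℤ | ∃ q ∈ Supp P, d = ρ * (q.1 : ℤ) + σ * (q.2 : ℤ)} =
      {ρ * (p.1 : ℤ) + σ * (p.2 : ℤ)} :=
    Set.Subset.antisymm (by rintro _ ⟨q, hq, rfl⟩; exact hP q hq p hp)
      (Set.singleton_subset_iff.2 ⟨p, hp, rfl⟩)
  rw [wdeg, hset, csSup_singleton]

theorem leadSupp_eq (hP : IsHomog ρ σ P) : LeadSupp ρ σ P = Supp P :=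
  Set.ext fun _ => ⟨And.left, fun hp => ⟨hp, (hP.wdeg_eq hp).symm⟩⟩

end IsHomog

theorem mem_supp_iff_mem_support {m : Fin 2 →₀ ℕ} : (m 0, m 1) ∈ Supp P ↔ m ∈ P.support := by
  have hm : m = Finsupp.single 0 (m 0) + Finsupp.single 1 (m 1) := by
    ext j
    fin_cases j <;> simp
  rw [Supp, Set.mem_ofPred_eq, ← hm, mem_support_iff]

namespace IsHomog

theorem isWeightedHomogeneous (hP : IsHomog ρ σ P) :
    P.IsWeightedHomogeneous ![ρ, σ] (wdeg ρ σ P) := by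
  intro m hm
  rw [hP.wdeg_eq (mem_supp_iff_mem_support.2 (mem_support_iff.2 hm)), Finsupp.weight_apply,
    Finsupp.sum_fintype _ _ (by simp)]
  simp [mul_comm]

theorem mem_support_dehomogenize (hP : IsHomog ρ σ P) (hρ : ρ ≠ 0) {j : ℕ} :
    j ∈ (dehomogenize P).support ↔ ∃ i, (i, j) ∈ Supp P := by
  rw [Polynomial.mem_support_iff, coeff_dehomogenize]
  constructor
  · intro hsum
    obtain ⟨m, hm, -⟩ := Finset.exists_ne_zero_of_sum_ne_zero hsum
    obtain ⟨hmP, rfl⟩ := Finset.mem_filter.1 hm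
    exact ⟨m 0, mem_supp_iff_mem_support.2 hmP⟩
  · rintro ⟨i, hi⟩
    have hunique : {m ∈ P.support | m 1 = j} = {Finsupp.single 0 i + Finsupp.single 1 j} := by
      ext m
      rw [Finset.mem_filter, Finset.mem_singleton]
      constructor
      · rintro ⟨hm, rfl⟩
        have h := hP _ (mem_supp_iff_mem_support.2 hm) _ hi
        have h0 : m 0 = i := by exact_mod_cast mul_left_cancel₀ hρ (add_right_cancel h)
        ext k
        fin_cases k <;> simp [h0]
      · rintro rfl
        exact ⟨mem_support_iff.2 hi, by simp⟩
    rwa [hunique, Finset.sum_singleton]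

theorem dehomogenize_ne_zero (hP : IsHomog ρ σ P) (hρ : ρ ≠ 0) (hp : p ∈ Supp P) :
    dehomogenize P ≠ 0 := by
  intro h0
  simpa [h0] using (hP.mem_support_dehomogenize hρ).2 ⟨p.1, hp⟩

theorem natDegree_dehomogenize (hP : IsHomog ρ σ P) (hρ : ρ ≠ 0) (hp : IsEn ρ σ P p) :
    (dehomogenize P).natDegree = p.2 := by
  rw [IsEn, hP.leadSupp_eq] at hp
  have hmem := (hP.mem_support_dehomogenize hρ).2 ⟨p.1, hp.1⟩
  refine le_antisymm ?_ (Polynomial.le_natDegree_of_mem_supp _ hmem)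
  obtain ⟨i, hi⟩ := (hP.mem_support_dehomogenize hρ).1
    (Polynomial.natDegree_mem_support_of_nonzero (hP.dehomogenize_ne_zero hρ hp.1))
  exact hp.2 _ hi

theorem rootMultiplicity_zero_dehomogenize (hP : IsHomog ρ σ P) (hρ : ρ ≠ 0)
    (hp : IsSt ρ σ P p) : (dehomogenize P).rootMultiplicity 0 = p.2 := by
  rw [IsSt, hP.leadSupp_eq] at hp
  have hmem := (hP.mem_support_dehomogenize hρ).2 ⟨p.1, hp.1⟩
  rw [Polynomial.rootMultiplicity_eq_natTrailingDegree']
  refine le_antisymm (Polynomial.natTrailingDegree_le_of_mem_supp _ hmem) ?_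
  obtain ⟨i, hi⟩ := (hP.mem_support_dehomogenize hρ).1
    (Polynomial.natTrailingDegree_mem_support_of_nonzero (hP.dehomogenize_ne_zero hρ hp.1))
  exact hp.2 _ hi

variable {s e : ℕ × ℕ}

theorem exists_eq_add_mul (hP : IsHomog ρ σ P) (hρσ : IsCoprime ρ σ) (hρ : 0 < ρ)
    (hs : IsSt ρ σ P s) (hq : q ∈ Supp P) :
    ∃ k : ℕ, (q.1 : ℤ) = s.1 - k * σ ∧ (q.2 : ℤ) = s.2 + k * ρ := by
  rw [IsSt, hP.leadSupp_eq] at hs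
  have hweight := hP q hq s hs.1
  obtain ⟨k, hk⟩ : ρ ∣ (q.2 : ℤ) - s.2 :=
    hρσ.dvd_of_dvd_mul_left ⟨s.1 - q.1, by linear_combination hweight⟩
  have hle := hs.2 q hq
  lift k to ℕ using by nlinarith
  exact ⟨k, mul_left_cancel₀ hρ.ne' (by linear_combination hweight - σ * hk), by linarith⟩

theorem card_support_dehomogenize_le (hP : IsHomog ρ σ P) (hρσ : IsCoprime ρ σ) (hρ : 0 < ρ)
    (hs : IsSt ρ σ P s) (he : IsEn ρ σ P e) {k : ℕ} (hk : (e.2 : ℤ) = s.2 + k * ρ) :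
    (dehomogenize P).support.card ≤ k + 1 := by
  have hsub : (dehomogenize P).support ⊆
      (Finset.range (k + 1)).image fun l => s.2 + l * ρ.toNat := by
    intro j hj
    obtain ⟨i, hi⟩ := (hP.mem_support_dehomogenize hρ.ne').1 hj
    obtain ⟨l, -, hl⟩ := hP.exists_eq_add_mul hρσ hρ hs hi
    rw [IsEn, hP.leadSupp_eq] at he
    have hle : j ≤ e.2 := he.2 _ hi
    refine Finset.mem_image.2 ⟨l, Finset.mem_range.2 ?_, ?_⟩ <;> zify
    · nlinarith
    · rw [Int.toNat_of_nonneg hρ.le, hl]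
  exact (Finset.card_le_card hsub).trans (Finset.card_image_le.trans_eq (Finset.card_range _))

end IsHomog

end Homogeneous

section BracketEqPow

variable {F : Type*} [Field F] {ρ σ : ℤ} {G R : MvPolynomial (Fin 2) F} {i : ℕ}

theorem wdeg_add_wdeg_sub_eq_mul_wdeg (hG : IsHomog ρ σ G) (hR : IsHomog ρ σ R) (hR0 : R ≠ 0)
    (hbr : Jb G R = R ^ i) : wdeg ρ σ G + wdeg ρ σ R - ρ - σ = i * wdeg ρ σ R := by
  have hjb := isWeightedHomogeneous_jb hG.isWeightedHomogeneous hR.isWeightedHomogeneous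
  rw [hbr] at hjb
  simpa using hjb.inj_right (pow_ne_zero i hR0) (hR.isWeightedHomogeneous.pow i)

theorem wdeg_dvd_fst_sub_snd (hG : IsHomog ρ σ G) (hR : IsHomog ρ σ R) (hρσ : IsCoprime ρ σ)
    (hρ : ρ ≠ 0) (hdeg : wdeg ρ σ G + wdeg ρ σ R - ρ - σ = i * wdeg ρ σ R) {p q : ℕ × ℕ}
    (hp : p ∈ Supp R) (hq : q ∈ Supp G) (h : wdeg ρ σ G * p.2 = wdeg ρ σ R * q.2) :
    wdeg ρ σ R ∣ (p.1 : ℤ) - p.2 := by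
  have hv := hG.wdeg_eq hq
  have hw := hR.wdeg_eq hp
  -- In the nonresonant case one would have `p.2 + q.2 = i * p.2 + 1`; `J` is the defect.
  let J : ℤ := i * p.2 - p.2 + 1 - q.2
  have hJ : wdeg ρ σ R * J = ρ * (p.1 - p.2) := by
    linear_combination -p.2 * hdeg + h + hw
  obtain ⟨j, hj⟩ : ρ ∣ J :=
    hρσ.dvd_of_dvd_mul_left ⟨q.1 + p.1 - 1 - i * p.1, by
      linear_combination -hdeg + hv + (1 - i) * hw⟩
  exact ⟨j, mul_left_cancel₀ hρ (by linear_combination wdeg ρ σ R * hj - hJ)⟩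

theorem wdeg_le_mul_or_wdeg_le_sub [CharZero F] (hG : IsHomog ρ σ G) (hR : IsHomog ρ σ R)
    (hρσ : IsCoprime ρ σ) (hρ : 0 < ρ) (hneg : ρ + σ < 0) (hbr : Jb G R = R ^ i)
    {s e : ℕ × ℕ} (hs : IsSt ρ σ R s) (he : IsEn ρ σ R e) {k : ℕ}
    (hk0 : 0 < k) (hk : (e.2 : ℤ) = s.2 + k * ρ) (hlt : s.2 < s.1) :
    wdeg ρ σ R ≤ -(ρ + σ) * k ∨ wdeg ρ σ R ≤ (s.1 : ℤ) - s.2 := by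
  refine or_iff_not_imp_left.2 fun hw => ?_
  rw [not_le] at hw
  have hsR : s ∈ Supp R := hs.1.1
  have hf := hR.dehomogenize_ne_zero hρ.ne' hsR
  have hE := C_mul_dehomogenize_jb hG.isWeightedHomogeneous hR.isWeightedHomogeneous
  rw [hbr, map_pow] at hE
  have hρ0 : (ρ : F) ≠ 0 := by exact_mod_cast hρ.ne'
  have hg : dehomogenize G ≠ 0 := by
    intro hg
    simp [hg, weightedWronskian, hf, hρ.ne'] at hE
  have hR0 : R ≠ 0 := by
    rintro rfl
    exact hf (map_zero _)
  have hdeg := wdeg_add_wdeg_sub_eq_mul_wdeg hG hR hR0 hbr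
  have hse : s.2 < e.2 := by
    zify
    nlinarith
  have hcard := hR.card_support_dehomogenize_le hρσ hρ hs he hk
  have hresonance := weightedWronskian.mul_rootMultiplicity_zero_eq_mul hf hg hρ0 hE.symm
    (d := -(ρ + σ)) (by linear_combination hdeg) (by linarith)
    (hw.trans_le' (mul_le_mul_of_nonneg_left (by zify at hcard; linarith) (by linarith)))
    (by simpa only [hR.natDegree_dehomogenize hρ.ne' he,
      hR.rootMultiplicity_zero_dehomogenize hρ.ne' hs] using hse)
  rw [hR.rootMultiplicity_zero_dehomogenize hρ.ne' hs,
    Polynomial.rootMultiplicity_eq_natTrailingDegree'] at hresonance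
  obtain ⟨δ, hq⟩ := (hG.mem_support_dehomogenize hρ.ne').1
    (Polynomial.natTrailingDegree_mem_support_of_nonzero hg)
  exact Int.le_of_dvd (by omega) (wdeg_dvd_fst_sub_snd hG hR hρσ hρ.ne' hdeg hsR hq hresonance)

end BracketEqPow

theorem add_mul_le_sq {ρ d k a b : ℤ} (ha : 0 ≤ a) (hd : 0 < d) (hk : 0 < k) (hb : b ≤ a ^ 2)
    (hρ : ρ ≤ a + k * d) : b + k * ρ ≤ (a + k * d) ^ 2 := by
  calc b + k * ρ ≤ a ^ 2 + k * (a + k * d) := by gcongr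
    _ ≤ a ^ 2 + k * d * (a + k * d) := by
      gcongr
      exact le_mul_of_one_le_right hk.le hd
    _ ≤ (a + k * d) ^ 2 := by
      have : 0 ≤ a * (k * d) := by positivity
      linarith

theorem stmt12_general (K : Type*) [Field K] [CharZero K]
    (ϱ ς : ℤ) (hgcd : Int.gcd ϱ ς = 1) (hϱ : 0 < ϱ) (hϱς : ϱ + ς < 0)
    (R G : MvPolynomial (Fin 2) K)
    (hhomR : IsHomog ϱ ς R) (hhomG : IsHomog ϱ ς G)
    (i : ℕ) (hbr : Jb G R = R ^ i)
    (hu : ϱ ≤ wdeg ϱ ς R)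
    (α' β' : ℕ) (hen : IsEn ϱ ς R (α', β'))
    (α β : ℕ) (hst : IsSt ϱ ς R (α, β))
    (hβα : β < α) (hbound : (β : ℤ) ≤ ((α : ℤ) - (β : ℤ) - 1) ^ 2) :
    β' < α' ∧ (β' : ℤ) ≤ ((α' : ℤ) - (β' : ℤ) - 1) ^ 2 := by
  have hcop : IsCoprime ϱ ς := Int.isCoprime_iff_gcd_eq_one.2 hgcd
  obtain ⟨k, hα', hβ'⟩ : ∃ k : ℕ, (α' : ℤ) = α - k * ς ∧ (β' : ℤ) = β + k * ϱ :=
    hhomR.exists_eq_add_mul hcop hϱ hst hen.1.1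
  have hdiff : (α' : ℤ) - β' - 1 = (α - β - 1) + k * -(ϱ + ς) := by
    linear_combination hα' - hβ'
  rcases k.eq_zero_or_pos with rfl | hk
  · have hβ'β : (β' : ℤ) = β := by simpa using hβ'
    have hα'α : (α' : ℤ) = α := by simpa using hα'
    exact ⟨by omega, by rwa [hβ'β, hα'α]⟩
  have hd : 0 < -(ϱ + ς) := by linarith
  have hkd : 0 < k * -(ϱ + ς) := by positivity
  have hϱle : ϱ ≤ (α - β - 1) + k * -(ϱ + ς) := by
    have := wdeg_le_mul_or_wdeg_le_sub hhomG hhomR hcop hϱ hϱς hbr hst hen hk hβ' hβα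
    rcases this with h | h <;> linarith
  refine ⟨by omega, ?_⟩
  rw [hdiff, hβ']
  exact add_mul_le_sq (by omega) hd (by exact_mod_cast hk) hbound hϱle

/-- Lemma "para la cota": under the hypotheses, if `β<α` and `β ≤ (α−β−1)²`
for `(α,β) = st_{ϱ,ς}(R)`, then `β'<α'` and `β' ≤ (α'−β'−1)²`
for `(α',β') = en_{ϱ,ς}(R)`. -/
theorem stmt12 (K : Type*) [Field K] [CharZero K]
    (ϱ ς : ℤ) (hgcd : Int.gcd ϱ ς = 1) (hϱ : 0 < ϱ) (hϱς : ϱ + ς < 0)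
    (R G : MvPolynomial (Fin 2) K)
    (hhomR : IsHomog ϱ ς R) (hhomG : IsHomog ϱ ς G)
    (hmono : ¬ IsMonomial R)
    (i : ℕ) (hi : 1 ≤ i) (hbr : Jb G R = R ^ i)
    (hu : ϱ ≤ wdeg ϱ ς R)
    (α' β' : ℕ) (hen : IsEn ϱ ς R (α', β')) (hv12 : (α' : ℤ) - 2 * (β' : ℤ) ≤ 0)
    (α β : ℕ) (hst : IsSt ϱ ς R (α, β))
    (hβα : β < α) (hbound : (β : ℤ) ≤ ((α : ℤ) - (β : ℤ) - 1) ^ 2) :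
    β' < α' ∧ (β' : ℤ) ≤ ((α' : ℤ) - (β' : ℤ) - 1) ^ 2 :=
  stmt12_general K ϱ ς hgcd hϱ hϱς R G hhomR hhomG i hbr hu α' β' hen α β hst hβα hbound

end
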